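/- Let 𝐅 = (F_1,…,F_d) be a d-tuple of continuous cdfs on ℝ with F_{i-1} ≥ F_i pointwise for all 2 ≤ i ≤ d. Then C^sym(𝐅) = C_{δ^𝐅} ∩ C^sym: the image of C^OS(𝐅) under S_𝐅 equals the set of symmetric copulas whose multidiagonal is δ^𝐅 = (F_i ∘ G^{-1}, 1 ≤ i ≤ d), where G = (1/d) Σ_{i=1}^d F_i. -/

import Mathlib

/-!
Write `G = (1/d) ∑ F_i`, the cdf of the mixture `meanMeas F`. If `X` is an order statistic with
marginals `F`, then every marginal of `X_Π` is the mixture, so `S_F` sends the copula of `X` to the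
law of `G(X_Π)` (`SF_copulaOf`, which rests on `F_i⁻¹(F_i(X_i)) = X_i` almost surely). This law is
symmetric with uniform marginals, and because `G` is nondecreasing its order statistics are
`G(X_1) ≤ … ≤ G(X_d)`; hence its multidiagonal is the tuple of laws of `G(X_i)`, whose cdfs are
`F_i ∘ G⁻¹` (`symmetrize_mem`, `cdf1_mdiagF`).

Conversely, for `U` distributed as a symmetric copula with multidiagonal `δ^F`, the vector
`(G⁻¹(U_(1)), …, G⁻¹(U_(d)))` is nondecreasing and has marginals `F`, since `U_(i)` is distributed as
`G(X_i)` with `X_i ∼ F_i` and `G⁻¹ ∘ G` is the identity almost everywhere for the mixture, which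
dominates `F_i`. Applying `G` gives back the order statistics of `U`, whose symmetrization is the law
of `U` by exchangeability (`exists_preimage`, `symmetrize_map_orderStat`).
-/

/- Formalization framework for "Maximum entropy distribution of order statistics with given
marginals" (Butucea, Delmas, Dutfoy, Fischer).  One-dimensional cdfs are identified with
(probability) measures on `ℝ`, and cdfs on `ℝ^d` with measures on `Fin d → ℝ`. -/

open MeasureTheory Set
open scoped ENNReal

noncomputable section

namespace MaxEntOS

variable {d : ℕ}

/-- The cumulative distribution function of a measure on `ℝ`. -/
def cdf1 (ν : Measure ℝ) (t : ℝ) : ℝ := (ν (Iic t)).toReal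

/-- The cdf extended to `EReal` arguments (so that `cdfE ν ⊥ = 0` and `cdfE ν ⊤ = ν ℝ`). -/
def cdfE (ν : Measure ℝ) (x : EReal) : ℝ := (ν {s : ℝ | (s : EReal) ≤ x}).toReal

/-- The generalized inverse (quantile function) of the cdf of `ν`, real-valued. -/
def qReal (ν : Measure ℝ) (t : ℝ) : ℝ := sInf {s : ℝ | t ≤ cdf1 ν s}

/-- The generalized inverse of a nondecreasing function `g : ℝ → ℝ`, `EReal`-valued, with the
conventions `inf ∅ = ⊤` and `inf ℝ = ⊥`. -/
def qInvE (g : ℝ → ℝ) (t : ℝ) : EReal := sInf ((fun s : ℝ => (s : EReal)) '' {s : ℝ | t ≤ g s})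

open scoped Classical in
/-- The differential entropy (with respect to Lebesgue measure) of a measure, with values in
`EReal` : it equals `⊥` if the measure is not absolutely continuous, and otherwise it is
`−∫ f log f`, computed as the difference of the lower integrals of the negative and positive
parts of `f log f`, where `f` is the density. -/
def dEntropy {α : Type*} [MeasureSpace α] (μ : Measure α) : EReal :=
  if μ ≪ (volume : Measure α) then
    ((∫⁻ x, ENNReal.ofReal
        (-((μ.rnDeriv volume x).toReal * Real.log ((μ.rnDeriv volume x).toReal))) : ℝ≥0∞) : EReal)
      - ((∫⁻ x, ENNReal.ofReal
        ((μ.rnDeriv volume x).toReal * Real.log ((μ.rnDeriv volume x).toReal)) : ℝ≥0∞) : EReal)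
  else ⊥

/-- The nondecreasing rearrangement (order statistics) of a tuple. -/
def orderStat (x : Fin d → ℝ) : Fin d → ℝ := fun i => x (Tuple.sort x i)

/-- The `i`-th one-dimensional marginal of a measure on `ℝ^d`. -/
def marg (μ : Measure (Fin d → ℝ)) (i : Fin d) : Measure ℝ := μ.map fun x => x i

/-- The multidiagonal of a measure on `ℝ^d` : the tuple of one-dimensional marginals of the
order statistics. -/
def multidiag (μ : Measure (Fin d → ℝ)) (i : Fin d) : Measure ℝ := μ.map fun x => orderStat x i

/-- The uniform distribution on `[0,1]`. -/
def uniform01 : Measure ℝ := (volume : Measure ℝ).restrict (Icc 0 1)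

/-- A copula : a probability measure on `ℝ^d` whose one-dimensional marginals are all uniform
on `[0,1]`. -/
def IsCopula (μ : Measure (Fin d → ℝ)) : Prop :=
  IsProbabilityMeasure μ ∧ ∀ i, marg μ i = uniform01

/-- A measure on `ℝ^d` is symmetric (exchangeable) if it is invariant under permutations of the
coordinates. -/
def IsSymmetric (μ : Measure (Fin d → ℝ)) : Prop :=
  ∀ π : Equiv.Perm (Fin d), μ.map (fun x => fun i => x (π i)) = μ

/-- `δ` belongs to `D` : it is the multidiagonal of some copula. -/
def IsMultidiag (δ : Fin d → Measure ℝ) : Prop :=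
  ∃ μ : Measure (Fin d → ℝ), IsCopula μ ∧ multidiag μ = δ

/-- `δ` belongs to `D^0` : it is the multidiagonal of some absolutely continuous copula. -/
def IsMultidiag0 (δ : Fin d → Measure ℝ) : Prop :=
  ∃ μ : Measure (Fin d → ℝ), IsCopula μ ∧ μ ≪ (volume : Measure (Fin d → ℝ)) ∧ multidiag μ = δ

/-- `F ∈ F_d` : `F` is a `d`-tuple of continuous one-dimensional cdfs (identified with atomless
probability measures on `ℝ`) which are stochastically ordered : `F (i-1) ≥ F i` pointwise. -/
structure IsMargOS [NeZero d] (F : Fin d → Measure ℝ) : Prop where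
  prob : ∀ i, IsProbabilityMeasure (F i)
  cont : ∀ i, ∀ t : ℝ, F i {t} = 0
  ord : ∀ i : Fin d, i ≠ 0 → ∀ t : ℝ, cdf1 (F i) t ≤ cdf1 (F (i - 1)) t

/-- `μ ∈ L^OS_d(F)` : `μ` is the distribution of a `d`-dimensional order statistic (an almost
surely nondecreasing random vector) with one-dimensional marginals `F`. -/
def IsCdfOS (F : Fin d → Measure ℝ) (μ : Measure (Fin d → ℝ)) : Prop :=
  IsProbabilityMeasure μ ∧ μ {x | Monotone x} = 1 ∧ ∀ i, marg μ i = F i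

/-- `F ∈ F_d^0` : there exists an absolutely continuous distribution of order statistics with
one-dimensional marginals `F`. -/
def IsMargOS0 [NeZero d] (F : Fin d → Measure ℝ) : Prop :=
  IsMargOS F ∧ ∃ μ : Measure (Fin d → ℝ), IsCdfOS F μ ∧ μ ≪ (volume : Measure (Fin d → ℝ))

/-- The functional `J(F) = ∑_{i=2}^d ∫ |log (F_{i-1}(t) − F_i(t))| dF_i(t) ∈ [0,∞]`. -/
def Jfun [NeZero d] (F : Fin d → Measure ℝ) : ℝ≥0∞ :=
  ∑ i : Fin d, if i = 0 then 0 else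
    ∫⁻ t, ENNReal.ofReal |Real.log (cdf1 (F (i - 1)) t - cdf1 (F i) t)| ∂(F i)

/-- The copula of a measure on `ℝ^d` (for continuous marginals this is the unique copula
provided by Sklar's theorem) : the law of `(F_1(X_1), …, F_d(X_d))`. -/
def copulaOf (μ : Measure (Fin d → ℝ)) : Measure (Fin d → ℝ) :=
  μ.map fun x => fun i => cdf1 (marg μ i) (x i)

/-- The set `C^{OS}(F)` of copulas of distributions of order statistics with marginal
cdfs `F`. -/
def copulaOS (F : Fin d → Measure ℝ) : Set (Measure (Fin d → ℝ)) :=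
  {C | ∃ μ, IsCdfOS F μ ∧ copulaOf μ = C}

/-- The joint distribution with one-dimensional marginals `F` and copula `C` : the law of
`(F_1^{-1}(U_1), …, F_d^{-1}(U_d))` where `U ∼ C`. -/
def joinCopula (F : Fin d → Measure ℝ) (C : Measure (Fin d → ℝ)) : Measure (Fin d → ℝ) :=
  C.map fun u => fun i => qReal (F i) (u i)

/-- The law of `X_Π`, where `X ∼ μ` and `Π` is an independent uniform random permutation of
`{1, …, d}`. -/
def symmetrize (μ : Measure (Fin d → ℝ)) : Measure (Fin d → ℝ) :=
  (d.factorial : ℝ≥0∞)⁻¹ • ∑ π : Equiv.Perm (Fin d), μ.map (fun x => fun i => x (π i))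

/-- The symmetrizing operator `S_F` on copulas : `S_F(C)` is the copula of `X_Π` where `X` has
one-dimensional marginals `F` and copula `C`, and `Π` is an independent uniform random
permutation. -/
def SF (F : Fin d → Measure ℝ) (C : Measure (Fin d → ℝ)) : Measure (Fin d → ℝ) :=
  copulaOf (symmetrize (joinCopula F C))

/-- The average cdf `G = (1/d) ∑_{i=1}^d F_i`. -/
def Gbar (F : Fin d → Measure ℝ) (t : ℝ) : ℝ := (∑ i, cdf1 (F i) t) / d

/-- `G` extended to `EReal` arguments (`GbarE F ⊥ = 0` and `GbarE F ⊤ = 1` for probability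
measures). -/
def GbarE (F : Fin d → Measure ℝ) (x : EReal) : ℝ := (∑ i, cdfE (F i) x) / d

/-- The multidiagonal `δ^F` associated to the marginals `F`, as a tuple of measures : the law
of `G(X_i)` where `X_i ∼ F_i`, whose cdf is `F_i ∘ G^{-1}`. -/
def mdiagF (F : Fin d → Measure ℝ) (i : Fin d) : Measure ℝ := (F i).map (Gbar F)

/-- `C` is a copula of the measure `ν` on `ℝ^d` : `C` is a copula and `ν` is the joint
distribution with the marginals of `ν` and copula `C`. -/
def IsCopulaOf (C ν : Measure (Fin d → ℝ)) : Prop :=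
  IsCopula C ∧ ν = joinCopula (marg ν) C

/-- The extended tuple of multidiagonal cdfs, with the conventions `δ_(0) = 1` and
`δ_(d+1) = 0`; the natural index `i ∈ {1, …, d}` corresponds to `δ_(i)`. -/
def dcdf (δ : Fin d → Measure ℝ) (i : ℕ) (t : ℝ) : ℝ :=
  if h0 : i = 0 then 1
  else if h : i ≤ d then cdf1 (δ ⟨i - 1, by omega⟩) t
  else 0

/-- The open set `Ψ^δ_i = {t ∈ (0,1) : δ_(i-1)(t) > δ_(i)(t)}`, for `1 ≤ i ≤ d+1`
(with the conventions `δ_(0) = 1` and `δ_(d+1) = 0`). -/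
def Psi (δ : Fin d → Measure ℝ) (i : ℕ) : Set ℝ :=
  Ioo 0 1 ∩ {t | dcdf δ i t < dcdf δ (i - 1) t}

/-- Left endpoint of the connected component of `U` containing `t`. -/
def lend (U : Set ℝ) (t : ℝ) : ℝ := sSup {s | s ≤ t ∧ s ∉ U}

/-- Right endpoint of the connected component of `U` containing `t`. -/
def rend (U : Set ℝ) (t : ℝ) : ℝ := sInf {s | t ≤ s ∧ s ∉ U}

/-- Midpoint `m_i^{(j)}` of the connected component of `U` containing `t`. -/
def midpt (U : Set ℝ) (t : ℝ) : ℝ := (lend U t + rend U t) / 2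

/-- The integrand `δ'_(i)(s) / (δ_(i-1)(s) − δ_(i)(s))` (that is, `K'_i`). -/
def kInt (δ : Fin d → Measure ℝ) (i : ℕ) (s : ℝ) : ℝ :=
  deriv (dcdf δ i) s / (dcdf δ (i - 1) s - dcdf δ i s)

/-- `K_i(t)`, integrating `K'_i` from the midpoint of the connected component of `Ψ^δ_i`
containing `t` (note `K_{d+1} = 0` holds automatically, `δ_(d+1)` being constant). -/
def Kfun (δ : Fin d → Measure ℝ) (i : ℕ) (t : ℝ) : ℝ :=
  ∫ s in (midpt (Psi δ i) t)..t, kInt δ i s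

/-- The function `a_i(t) = K'_i(t) e^{K_{i+1}(t) − K_i(t)} 1_{Ψ^δ_i ∩ Ψ^δ_{i+1}}(t)`. -/
def aFun (δ : Fin d → Measure ℝ) (i : ℕ) : ℝ → ℝ :=
  (Psi δ i ∩ Psi δ (i + 1)).indicator fun t =>
    kInt δ i t * Real.exp (Kfun δ (i + 1) t - Kfun δ i t)

/-- The set `L_δ` of `u ∈ [0,1]^d` such that `(u_(i-1), u_(i)) ⊆ Ψ^δ_i` for all `2 ≤ i ≤ d`. -/
def Lset [NeZero d] (δ : Fin d → Measure ℝ) : Set (Fin d → ℝ) :=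
  {u | (∀ j, u j ∈ Icc (0 : ℝ) 1) ∧
    ∀ i : Fin d, i ≠ 0 → Ioo (orderStat u (i - 1)) (orderStat u i) ⊆ Psi δ (i.val + 1)}

/-- The density `c_δ(u) = (1/d!) 1_{L_δ}(u) ∏_{i=1}^d a_i(u_(i))` of the maximum entropy copula
with multidiagonal `δ`. -/
def cDelta [NeZero d] (δ : Fin d → Measure ℝ) : (Fin d → ℝ) → ℝ :=
  (Lset δ).indicator fun u =>
    (d.factorial : ℝ)⁻¹ * ∏ i : Fin d, aFun δ (i.val + 1) (orderStat u i)

/-- The maximum entropy copula `C_δ` with multidiagonal `δ` : the measure with density `c_δ`. -/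
def CDelta [NeZero d] (δ : Fin d → Measure ℝ) : Measure (Fin d → ℝ) :=
  (volume : Measure (Fin d → ℝ)).withDensity fun u => ENNReal.ofReal (cDelta δ u)

/-- The density of a one-dimensional measure `ν` with respect to Lebesgue measure. -/
def densOf (ν : Measure ℝ) (t : ℝ) : ℝ := (ν.rnDeriv volume t).toReal

/-- The function `ℓ_i(t) = f_i(t) / (F_{i-1}(t) − F_i(t))`. -/
def ellF [NeZero d] (F : Fin d → Measure ℝ) (i : Fin d) (t : ℝ) : ℝ :=
  densOf (F i) t / (cdf1 (F (i - 1)) t - cdf1 (F i) t)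

/-- The set `L^F` of ordered vectors `x ∈ ℝ^d` such that `F_{i-1}(t) > F_i(t)` for all
`t ∈ (x_{i-1}, x_i)` and all `2 ≤ i ≤ d`. -/
def LsetF [NeZero d] (F : Fin d → Measure ℝ) : Set (Fin d → ℝ) :=
  {x | Monotone x ∧ ∀ i : Fin d, i ≠ 0 →
    ∀ t ∈ Ioo (x (i - 1)) (x i), cdf1 (F i) t < cdf1 (F (i - 1)) t}

/-- The density `f_F` of the maximum entropy distribution of order statistics with marginal
cdfs `F` :
`f_F(x) = f_1(x_1) ∏_{i=2}^d ℓ_i(x_i) exp(−∫_{x_{i-1}}^{x_i} ℓ_i(s) ds) 1_{L^F}(x)`. -/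
def fF [NeZero d] (F : Fin d → Measure ℝ) : (Fin d → ℝ) → ℝ :=
  (LsetF F).indicator fun x =>
    densOf (F 0) (x 0) *
      ∏ i ∈ Finset.univ.erase (0 : Fin d),
        ellF F i (x i) * Real.exp (-∫ s in (x (i - 1))..(x i), ellF F i s)


/-! ### One-dimensional distribution functions and quantiles -/

lemma cdf1_mono (ν : Measure ℝ) [IsProbabilityMeasure ν] : Monotone (cdf1 ν) := fun _ _ h =>
  ENNReal.toReal_mono (measure_ne_top _ _) (measure_mono (Iic_subset_Iic.2 h))

lemma cdf1_eq_cdf (ν : Measure ℝ) [IsProbabilityMeasure ν] :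
    cdf1 ν = ProbabilityTheory.cdf ν := by
  funext t
  rw [ProbabilityTheory.cdf_eq_real]; rfl

lemma cdf1_continuous (ν : Measure ℝ) [IsProbabilityMeasure ν] (h : ∀ t, ν {t} = 0) :
    Continuous (cdf1 ν) := by
  rw [cdf1_eq_cdf, continuous_iff_continuousAt]
  intro x
  rw [(ProbabilityTheory.monotone_cdf ν).continuousAt_iff_leftLim_eq_rightLim,
    StieltjesFunction.rightLim_eq]
  have h1 := (ProbabilityTheory.cdf ν).measure_singleton x
  rw [ProbabilityTheory.measure_cdf, h x] at h1
  have h2 := ENNReal.ofReal_eq_zero.1 h1.symm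
  have h3 := (ProbabilityTheory.monotone_cdf ν).leftLim_le (le_refl x)
  linarith

lemma cdf1_nonneg (ν : Measure ℝ) (t : ℝ) : 0 ≤ cdf1 ν t := ENNReal.toReal_nonneg

lemma cdf1_le_one (ν : Measure ℝ) [IsProbabilityMeasure ν] (t : ℝ) : cdf1 ν t ≤ 1 := by
  rw [cdf1_eq_cdf]; exact ProbabilityTheory.cdf_le_one ν t

lemma ofReal_cdf1 (ν : Measure ℝ) [IsProbabilityMeasure ν] (t : ℝ) :
    ENNReal.ofReal (cdf1 ν t) = ν (Iic t) :=
  ENNReal.ofReal_toReal (measure_ne_top _ _)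

lemma exists_cdf1_eq (ν : Measure ℝ) [IsProbabilityMeasure ν] (h : ∀ t, ν {t} = 0) {u : ℝ}
    (hu : u ∈ Ioo (0 : ℝ) 1) : ∃ s, cdf1 ν s = u := by
  have hb := ProbabilityTheory.tendsto_cdf_atBot ν
  have ht := ProbabilityTheory.tendsto_cdf_atTop ν
  rw [← cdf1_eq_cdf] at hb ht
  obtain ⟨a, ha⟩ := (hb.eventually (gt_mem_nhds hu.1)).exists
  obtain ⟨b, hb⟩ := (ht.eventually (lt_mem_nhds hu.2)).exists
  exact mem_range_of_exists_le_of_exists_ge (cdf1_continuous ν h) ⟨a, ha.le⟩ ⟨b, hb.le⟩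

instance : IsProbabilityMeasure uniform01 := ⟨by simp [uniform01]⟩

lemma uniform01_Iic (t : ℝ) : uniform01 (Iic t) = ENNReal.ofReal (min t 1) := by
  rw [uniform01, Measure.restrict_apply measurableSet_Iic]
  have : Iic t ∩ Icc (0 : ℝ) 1 = Icc 0 (min t 1) := by
    ext x; simp only [mem_inter_iff, mem_Iic, mem_Icc, le_min_iff]; tauto
  rw [this, Real.volume_Icc, sub_zero]

lemma uniform01_singleton (t : ℝ) : uniform01 {t} = 0 :=
  measure_singleton (μ := (volume : Measure ℝ).restrict (Icc 0 1)) t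

lemma uniform01_ae_Ioo : ∀ᵐ u ∂uniform01, u ∈ Ioo (0 : ℝ) 1 := by
  have : uniform01 = (volume : Measure ℝ).restrict (Ioo 0 1) :=
    Measure.restrict_congr_set Ioo_ae_eq_Icc.symm
  rw [this]
  exact ae_restrict_mem measurableSet_Ioo

/-- The probability integral transform: if `X ∼ ν` is atomless then `F_ν(X)` is uniform. -/
lemma map_cdf1 (ν : Measure ℝ) [IsProbabilityMeasure ν] (h : ∀ t, ν {t} = 0) :
    ν.map (cdf1 ν) = uniform01 := by
  have hm := (cdf1_mono ν).measurable
  have : IsProbabilityMeasure (ν.map (cdf1 ν)) := Measure.isProbabilityMeasure_map hm.aemeasurable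
  refine Measure.ext_of_Iic _ _ fun t => ?_
  rw [Measure.map_apply hm measurableSet_Iic, uniform01_Iic]
  -- For `cdf1 ν s = u`, the half-line `Iic s` lies between `{F < u}` and `{F ≤ u}`.
  have low : ∀ u ∈ Ioo (0 : ℝ) 1, ν (cdf1 ν ⁻¹' Iio u) ≤ ENNReal.ofReal u := by
    intro u hu
    obtain ⟨s, rfl⟩ := exists_cdf1_eq ν h hu
    rw [ofReal_cdf1]
    refine measure_mono fun x hx => ?_
    by_contra hxs
    exact absurd (cdf1_mono ν (not_le.1 hxs).le) (not_le.2 hx)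
  have high : ∀ u ∈ Ioo (0 : ℝ) 1, ENNReal.ofReal u ≤ ν (cdf1 ν ⁻¹' Iic u) := by
    intro u hu
    obtain ⟨s, rfl⟩ := exists_cdf1_eq ν h hu
    rw [ofReal_cdf1]
    exact measure_mono fun x hx => cdf1_mono ν hx
  rcases lt_or_ge t 0 with ht | ht
  · have : cdf1 ν ⁻¹' Iic t = ∅ := by
      ext x; simpa using lt_of_lt_of_le ht (cdf1_nonneg ν x)
    rw [this, measure_empty, eq_comm, ENNReal.ofReal_eq_zero]
    exact (min_le_left _ _).trans ht.le
  rcases le_or_gt 1 t with ht1 | ht1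
  · have : cdf1 ν ⁻¹' Iic t = univ := by
      ext x; simpa using (cdf1_le_one ν x).trans ht1
    rw [this, measure_univ, min_eq_right ht1, ENNReal.ofReal_one]
  rw [min_eq_left ht1.le]
  apply le_antisymm
  · have hlim : Filter.Tendsto ENNReal.ofReal (nhdsWithin t (Ioi t)) (nhds (ENNReal.ofReal t)) :=
      (ENNReal.continuous_ofReal.tendsto t).mono_left nhdsWithin_le_nhds
    refine ge_of_tendsto hlim ?_
    filter_upwards [Ioo_mem_nhdsGT ht1] with u hu
    refine le_trans (measure_mono fun x hx => ?_) (low u ⟨ht.trans_lt hu.1, hu.2⟩)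
    exact lt_of_le_of_lt hx hu.1
  · rcases ht.eq_or_lt with rfl | ht0
    · simp
    · exact high t ⟨ht0, ht1⟩

lemma cdf1_level_null (ν : Measure ℝ) [IsProbabilityMeasure ν] (h : ∀ t, ν {t} = 0) (t : ℝ) :
    ν {x | cdf1 ν x = t} = 0 := by
  have h1 := Measure.map_apply (cdf1_mono ν).measurable (measurableSet_singleton t) (μ := ν)
  rw [map_cdf1 ν h, uniform01_singleton] at h1
  exact h1.symm

lemma bddBelow_quantile (ν : Measure ℝ) [IsProbabilityMeasure ν] {u : ℝ} (hu : 0 < u) :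
    BddBelow {s : ℝ | u ≤ cdf1 ν s} := by
  have hb := ProbabilityTheory.tendsto_cdf_atBot ν
  rw [← cdf1_eq_cdf] at hb
  obtain ⟨a, ha⟩ := (hb.eventually (gt_mem_nhds hu)).exists
  refine ⟨a, fun s hs => ?_⟩
  by_contra hsa
  exact absurd (cdf1_mono ν (not_le.1 hsa).le) (not_le.2 (ha.trans_le hs))

lemma cdf1_qReal (ν : Measure ℝ) [IsProbabilityMeasure ν] (h : ∀ t, ν {t} = 0) {u : ℝ}
    (hu : u ∈ Ioo (0 : ℝ) 1) : cdf1 ν (qReal ν u) = u := by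
  obtain ⟨s, hs⟩ := exists_cdf1_eq ν h hu
  have hmem : s ∈ {s : ℝ | u ≤ cdf1 ν s} := hs.ge
  have hbdd := bddBelow_quantile ν hu.1
  apply le_antisymm
  · exact (cdf1_mono ν (csInf_le hbdd hmem)).trans hs.le
  · exact (isClosed_le continuous_const (cdf1_continuous ν h)).csInf_mem ⟨s, hmem⟩ hbdd

lemma qReal_monotoneOn (ν : Measure ℝ) [IsProbabilityMeasure ν] (h : ∀ t, ν {t} = 0) :
    MonotoneOn (qReal ν) (Ioo 0 1) := by
  intro u hu v hv huv
  obtain ⟨s, hs⟩ := exists_cdf1_eq ν h hv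
  exact csInf_le_csInf (bddBelow_quantile ν hu.1) ⟨s, hs.ge⟩ fun x hx => huv.trans hx

lemma qReal_aemeasurable (ν : Measure ℝ) [IsProbabilityMeasure ν] (h : ∀ t, ν {t} = 0) :
    AEMeasurable (qReal ν) uniform01 := by
  have : uniform01 = (volume : Measure ℝ).restrict (Ioo 0 1) :=
    Measure.restrict_congr_set Ioo_ae_eq_Icc.symm
  rw [this]
  exact aemeasurable_restrict_of_monotoneOn measurableSet_Ioo (qReal_monotoneOn ν h)

/-- `F⁻¹(F(x)) = x` almost surely: an exceptional `x` lies in one of the countably many null level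
sets `{F = F r}` with `r` rational. -/
lemma qReal_cdf1_ae (ν : Measure ℝ) [IsProbabilityMeasure ν] (h : ∀ t, ν {t} = 0) :
    ∀ᵐ x ∂ν, qReal ν (cdf1 ν x) = x := by
  have h0 : ∀ᵐ x ∂ν, cdf1 ν x ≠ 0 := by
    rw [ae_iff]; simpa using cdf1_level_null ν h 0
  have hr : ∀ᵐ x ∂ν, ∀ r : ℚ, cdf1 ν x ≠ cdf1 ν r := by
    rw [ae_all_iff]; intro r
    rw [ae_iff]; simpa using cdf1_level_null ν h (cdf1 ν r)
  filter_upwards [h0, hr] with x hx0 hxr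
  have hpos : 0 < cdf1 ν x := lt_of_le_of_ne (cdf1_nonneg ν x) hx0.symm
  have hmem : x ∈ {s : ℝ | cdf1 ν x ≤ cdf1 ν s} := le_refl (cdf1 ν x)
  refine le_antisymm (csInf_le (bddBelow_quantile ν hpos) hmem) ?_
  by_contra hlt
  obtain ⟨s, hs, hsx⟩ := exists_lt_of_csInf_lt ⟨x, hmem⟩ (not_le.1 hlt)
  obtain ⟨r, hsr, hrx⟩ := exists_rat_btwn hsx
  exact hxr r (le_antisymm (le_trans hs (cdf1_mono ν hsr.le)) (cdf1_mono ν hrx.le))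

/-! ### Order statistics -/

lemma orderStat_monotone (x : Fin d → ℝ) : Monotone (orderStat x) := Tuple.monotone_sort x

/-- A monotone rearrangement of `x` is its order statistics. -/
lemma eq_orderStat (x : Fin d → ℝ) (σ : Equiv.Perm (Fin d)) (h : Monotone fun i => x (σ i)) :
    (fun i => x (σ i)) = orderStat x :=
  (Tuple.comp_sort_eq_comp_iff_monotone (f := x) (σ := σ)).2 h

lemma orderStat_of_monotone {x : Fin d → ℝ} (h : Monotone x) : orderStat x = x :=
  (eq_orderStat x 1 h).symm

lemma orderStat_perm (x : Fin d → ℝ) (π : Equiv.Perm (Fin d)) :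
    orderStat (fun i => x (π i)) = orderStat x :=
  eq_orderStat x (π * Tuple.sort fun i => x (π i)) (orderStat_monotone fun i => x (π i))

lemma orderStat_comp {g : ℝ → ℝ} (hg : Monotone g) (x : Fin d → ℝ) :
    orderStat (fun i => g (x i)) = fun i => g (orderStat x i) :=
  (eq_orderStat (fun i => g (x i)) (Tuple.sort x) fun _ _ hij => hg (orderStat_monotone x hij)).symm

lemma isClosed_monotone : IsClosed {x : Fin d → ℝ | Monotone x} := by
  simp only [Monotone, ofPred_forall]
  exact isClosed_iInter fun i => isClosed_iInter fun j => isClosed_iInter fun _ =>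
    isClosed_le (continuous_apply i) (continuous_apply j)

lemma measurable_perm (π : Equiv.Perm (Fin d)) :
    Measurable fun (x : Fin d → ℝ) i => x (π i) :=
  measurable_pi_lambda _ fun i => measurable_pi_apply (π i)

lemma measurable_orderStat : Measurable (orderStat : (Fin d → ℝ) → Fin d → ℝ) := by
  intro A hA
  -- `orderStat x ∈ A` iff some rearrangement of `x` is monotone and lies in `A`.
  have : orderStat ⁻¹' A = ⋃ σ : Equiv.Perm (Fin d),
      (fun (x : Fin d → ℝ) i => x (σ i)) ⁻¹' ({x | Monotone x} ∩ A) := by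
    ext x
    simp only [mem_preimage, mem_iUnion, mem_inter_iff, mem_ofPred_eq]
    constructor
    · intro h; exact ⟨Tuple.sort x, orderStat_monotone x, h⟩
    · rintro ⟨σ, hσ, h⟩; rwa [← eq_orderStat x σ hσ]
  rw [this]
  exact MeasurableSet.iUnion fun σ =>
    measurable_perm σ (isClosed_monotone.measurableSet.inter hA)

/-! ### Symmetrization -/

lemma factorial_inv_mul : (d.factorial : ℝ≥0∞)⁻¹ * d.factorial = 1 :=
  ENNReal.inv_mul_cancel (by exact_mod_cast d.factorial_ne_zero) (ENNReal.natCast_ne_top _)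

lemma symmetrize_apply (μ : Measure (Fin d → ℝ)) {A : Set (Fin d → ℝ)} (hA : MeasurableSet A) :
    symmetrize μ A = (d.factorial : ℝ≥0∞)⁻¹ *
      ∑ π : Equiv.Perm (Fin d), μ ((fun x i => x (π i)) ⁻¹' A) := by
  simp only [symmetrize, Measure.smul_apply, Measure.finsetSum_apply, smul_eq_mul]
  simp_rw [Measure.map_apply (measurable_perm _) hA]

instance (μ : Measure (Fin d → ℝ)) [IsProbabilityMeasure μ] :
    IsProbabilityMeasure (symmetrize μ) := by
  refine ⟨?_⟩
  rw [symmetrize_apply μ MeasurableSet.univ]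
  simp [Fintype.card_perm, factorial_inv_mul]

/-- Each value `j` is taken by `π i` for `(d-1)!` permutations `π`, so averaging `f (π i)` over all
`π` gives the mean of `f`. -/
lemma avg_perm [NeZero d] (f : Fin d → ℝ≥0∞) (i : Fin d) :
    (d.factorial : ℝ≥0∞)⁻¹ * ∑ π : Equiv.Perm (Fin d), f (π i) = (d : ℝ≥0∞)⁻¹ * ∑ j, f j := by
  have hd : (d : ℝ≥0∞) ≠ 0 := by exact_mod_cast NeZero.ne d
  have hind : ∀ j, ∑ π : Equiv.Perm (Fin d), f (π j) = ∑ π : Equiv.Perm (Fin d), f (π i) := by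
    intro j
    refine Fintype.sum_equiv (Equiv.mulRight (Equiv.swap i j)) _ _ fun π => ?_
    simp [Equiv.Perm.mul_apply]
  have h1 : (d : ℝ≥0∞) * ∑ π : Equiv.Perm (Fin d), f (π i) = d.factorial * ∑ j, f j := by
    calc (d : ℝ≥0∞) * ∑ π : Equiv.Perm (Fin d), f (π i)
        = ∑ j : Fin d, ∑ π : Equiv.Perm (Fin d), f (π j) := by simp [hind]
      _ = ∑ π : Equiv.Perm (Fin d), ∑ j : Fin d, f (π j) := Finset.sum_comm
      _ = ∑ _π : Equiv.Perm (Fin d), ∑ j : Fin d, f j :=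
          Finset.sum_congr rfl fun π _ => Equiv.sum_comp π f
      _ = _ := by simp [Fintype.card_perm]
  calc (d.factorial : ℝ≥0∞)⁻¹ * ∑ π : Equiv.Perm (Fin d), f (π i)
      = (d : ℝ≥0∞)⁻¹ * d * ((d.factorial : ℝ≥0∞)⁻¹ * ∑ π : Equiv.Perm (Fin d), f (π i)) := by
        rw [ENNReal.inv_mul_cancel hd (ENNReal.natCast_ne_top _), one_mul]
    _ = (d : ℝ≥0∞)⁻¹ * ((d.factorial : ℝ≥0∞)⁻¹ *
          (d * ∑ π : Equiv.Perm (Fin d), f (π i))) := by ring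
    _ = (d : ℝ≥0∞)⁻¹ * ∑ j, f j := by
        rw [h1, ← mul_assoc (d.factorial : ℝ≥0∞)⁻¹, factorial_inv_mul, one_mul]

lemma symmetrize_isSymmetric (μ : Measure (Fin d → ℝ)) : IsSymmetric (symmetrize μ) := by
  intro σ
  ext A hA
  rw [Measure.map_apply (measurable_perm σ) hA, symmetrize_apply μ hA,
    symmetrize_apply μ (measurable_perm σ hA)]
  congr 1
  exact Fintype.sum_equiv (Equiv.mulRight σ) _ _ fun π => rfl

/-- Symmetrization commutes with applying the same function to all coordinates. -/
lemma map_symmetrize (μ : Measure (Fin d → ℝ)) {g : ℝ → ℝ} (hg : Measurable g) :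
    (symmetrize μ).map (fun x i => g (x i)) = symmetrize (μ.map fun x i => g (x i)) := by
  have hgm : Measurable fun (x : Fin d → ℝ) i => g (x i) :=
    measurable_pi_lambda _ fun i => hg.comp (measurable_pi_apply i)
  ext A hA
  rw [Measure.map_apply hgm hA, symmetrize_apply _ hA, symmetrize_apply _ (hgm hA)]
  congr 1
  refine Finset.sum_congr rfl fun π _ => ?_
  rw [Measure.map_apply hgm (measurable_perm π hA)]
  rfl

/-- The law of the order statistics is unchanged by symmetrization. -/
lemma map_orderStat_symmetrize (μ : Measure (Fin d → ℝ)) :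
    (symmetrize μ).map orderStat = μ.map orderStat := by
  ext A hA
  rw [Measure.map_apply measurable_orderStat hA, Measure.map_apply measurable_orderStat hA,
    symmetrize_apply _ (measurable_orderStat hA)]
  have : ∀ π : Equiv.Perm (Fin d), (fun (x : Fin d → ℝ) i => x (π i)) ⁻¹' (orderStat ⁻¹' A)
      = orderStat ⁻¹' A := by
    intro π; ext x; simp only [mem_preimage, orderStat_perm]
  simp only [this, Finset.sum_const, Finset.card_univ, Fintype.card_perm, Fintype.card_fin,
    nsmul_eq_mul]
  rw [← mul_assoc, factorial_inv_mul, one_mul]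

/-- A symmetric law is recovered from the law of its order statistics by symmetrization: for fixed
`x`, the permutations `sort x * π` run over all permutations as `π` does. -/
lemma symmetrize_map_orderStat (C : Measure (Fin d → ℝ)) (hC : IsSymmetric C) :
    symmetrize (C.map orderStat) = C := by
  ext A hA
  rw [symmetrize_apply _ hA]
  have h1 : ∀ π : Equiv.Perm (Fin d),
      C.map orderStat ((fun (x : Fin d → ℝ) i => x (π i)) ⁻¹' A)
        = ∫⁻ x, A.indicator 1 (fun i => x ((Tuple.sort x * π) i)) ∂C := by
    intro π
    have hm := measurable_orderStat (measurable_perm π hA)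
    rw [Measure.map_apply measurable_orderStat (measurable_perm π hA), ← lintegral_indicator_one hm]
    rfl
  have hmeas : ∀ π : Equiv.Perm (Fin d),
      Measurable fun x : Fin d → ℝ => A.indicator (1 : (Fin d → ℝ) → ℝ≥0∞) (fun i => x (π i)) := fun π =>
    (measurable_one.indicator hA).comp (measurable_perm π)
  have hmeas' : ∀ π : Equiv.Perm (Fin d), Measurable fun x : Fin d → ℝ =>
      A.indicator (1 : (Fin d → ℝ) → ℝ≥0∞) (fun i => x ((Tuple.sort x * π) i)) := fun π =>
    (hmeas π).comp measurable_orderStat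
  have h2 : ∀ π : Equiv.Perm (Fin d), ∫⁻ x, A.indicator (1 : (Fin d → ℝ) → ℝ≥0∞) (fun i => x (π i)) ∂C
      = C A := by
    intro π
    rw [← lintegral_map (f := A.indicator 1) (measurable_one.indicator hA) (measurable_perm π),
      hC π, lintegral_indicator_one hA]
  simp_rw [h1]
  rw [← lintegral_finsetSum _ fun π _ => hmeas' π]
  have h3 : ∀ x : Fin d → ℝ,
      ∑ π : Equiv.Perm (Fin d), A.indicator (1 : (Fin d → ℝ) → ℝ≥0∞) (fun i => x ((Tuple.sort x * π) i))
        = ∑ π : Equiv.Perm (Fin d), A.indicator (1 : (Fin d → ℝ) → ℝ≥0∞) (fun i => x (π i)) := fun x =>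
    Fintype.sum_equiv (Equiv.mulLeft (Tuple.sort x)) _ _ fun π => rfl
  simp_rw [h3]
  rw [lintegral_finsetSum _ fun π _ => hmeas π]
  simp only [h2, Finset.sum_const, Finset.card_univ, Fintype.card_perm, Fintype.card_fin,
    nsmul_eq_mul]
  rw [← mul_assoc, factorial_inv_mul, one_mul]

/-! ### The mean marginal -/

/-- The mixture `(1/d) ∑ F_i`, the probability measure whose cdf is `Gbar F`. -/
def meanMeas (F : Fin d → Measure ℝ) : Measure ℝ := (d : ℝ≥0∞)⁻¹ • ∑ i, F i

lemma meanMeas_apply (F : Fin d → Measure ℝ) (A : Set ℝ) :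
    meanMeas F A = (d : ℝ≥0∞)⁻¹ * ∑ i, F i A := by
  simp [meanMeas]

lemma cdf1_meanMeas (F : Fin d → Measure ℝ) (hF : ∀ i, IsProbabilityMeasure (F i)) :
    cdf1 (meanMeas F) = Gbar F := by
  funext t
  rw [cdf1, meanMeas_apply, ENNReal.toReal_mul, ENNReal.toReal_sum fun i _ => measure_ne_top _ _,
    ENNReal.toReal_inv, ENNReal.toReal_natCast, Gbar, div_eq_inv_mul]
  rfl

lemma meanMeas_prob [NeZero d] (F : Fin d → Measure ℝ) (hF : ∀ i, IsProbabilityMeasure (F i)) :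
    IsProbabilityMeasure (meanMeas F) := by
  refine ⟨?_⟩
  rw [meanMeas_apply]
  simp only [measure_univ, Finset.sum_const, Finset.card_univ, Fintype.card_fin, nsmul_eq_mul,
    mul_one]
  exact ENNReal.inv_mul_cancel (by exact_mod_cast NeZero.ne d) (ENNReal.natCast_ne_top _)

lemma meanMeas_singleton (F : Fin d → Measure ℝ) (hF : ∀ i, ∀ t : ℝ, F i {t} = 0) (t : ℝ) :
    meanMeas F {t} = 0 := by
  simp [meanMeas_apply, hF]

lemma absolutelyContinuous_meanMeas (F : Fin d → Measure ℝ) (i : Fin d) : F i ≪ meanMeas F := by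
  intro A hA
  rw [meanMeas_apply, mul_eq_zero] at hA
  rcases hA with hA | hA
  · exact absurd (ENNReal.inv_eq_zero.1 hA) (ENNReal.natCast_ne_top _)
  · exact (Finset.sum_eq_zero_iff.1 hA) i (Finset.mem_univ i)

lemma marg_symmetrize [NeZero d] (μ : Measure (Fin d → ℝ)) (i : Fin d) :
    marg (symmetrize μ) i = meanMeas (marg μ) := by
  ext A hA
  rw [marg, Measure.map_apply (measurable_pi_apply i) hA,
    symmetrize_apply μ (measurable_pi_apply i hA), meanMeas_apply]
  have : ∀ j, marg μ j A = μ ((fun x => x j) ⁻¹' A) := fun j =>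
    Measure.map_apply (measurable_pi_apply j) hA
  simp_rw [this]
  exact avg_perm (fun j => μ ((fun x => x j) ⁻¹' A)) i

/-- The law of `G(X_i)` with `X_i ∼ F_i` has cdf `F_i ∘ G⁻¹`. -/
lemma cdf1_mdiagF [NeZero d] (F : Fin d → Measure ℝ) (hF : IsMargOS F) (i : Fin d) (t : ℝ) :
    cdf1 (mdiagF F i) t = cdfE (F i) (qInvE (Gbar F) t) := by
  have := meanMeas_prob F hF.prob
  have hG := cdf1_meanMeas F hF.prob
  have hmono : Monotone (Gbar F) := hG ▸ cdf1_mono (meanMeas F)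
  rw [cdf1, cdfE, mdiagF, Measure.map_apply hmono.measurable measurableSet_Iic]
  congr 1
  have hlev : ∀ᵐ s ∂(F i), Gbar F s ≠ t := by
    refine (absolutelyContinuous_meanMeas F i).ae_le (?_ : ∀ᵐ s ∂(meanMeas F), Gbar F s ≠ t)
    rw [ae_iff, ← hG]
    simpa using cdf1_level_null (meanMeas F) (meanMeas_singleton F hF.cont) t
  have hpt : ∀ᵐ s : ℝ ∂(F i), (s : EReal) ≠ qInvE (Gbar F) t := by
    -- At most one real number equals the quantile, and `F i` has no atoms.
    rw [ae_iff]
    refine measure_mono_null (t := {(qInvE (Gbar F) t).toReal}) (fun s hs => ?_) (hF.cont i _)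
    simp only [mem_ofPred_eq, not_not] at hs
    rw [mem_singleton_iff, ← hs, EReal.toReal_coe]
  refine measure_congr ?_
  filter_upwards [hlev, hpt] with s hs1 hs2
  refine propext ⟨fun h => ?_, fun h => ?_⟩
  · have hlt : Gbar F s < t := lt_of_le_of_ne h hs1
    refine le_sInf ?_
    rintro _ ⟨r, hr, rfl⟩
    refine EReal.coe_le_coe_iff.2 ?_
    by_contra hrs
    exact absurd (hmono (not_le.1 hrs).le) (not_le.2 (hlt.trans_le hr))
  · by_contra hgt
    have hgt' : t < Gbar F s := not_le.1 hgt
    exact hs2 (le_antisymm h (sInf_le ⟨s, hgt'.le, rfl⟩))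

/-! ### Sklar's theorem for atomless marginals, and the two inclusions -/

lemma map_eval_comp (μ : Measure (Fin d → ℝ)) (g : Fin d → ℝ → ℝ) (hg : ∀ i, Measurable (g i))
    (i : Fin d) : marg (μ.map fun x i => g i (x i)) i = (marg μ i).map (g i) := by
  have hm : Measurable fun (x : Fin d → ℝ) i => g i (x i) :=
    measurable_pi_lambda _ fun i => (hg i).comp (measurable_pi_apply i)
  rw [marg, marg, Measure.map_map (measurable_pi_apply i) hm,
    Measure.map_map (hg i) (measurable_pi_apply i)]
  rfl

lemma ae_of_marg {μ : Measure (Fin d → ℝ)} {i : Fin d} {p : ℝ → Prop}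
    (h : ∀ᵐ t ∂(marg μ i), p t) : ∀ᵐ x ∂μ, p (x i) :=
  ae_of_ae_map (measurable_pi_apply i).aemeasurable h

lemma aemeasurable_coord {μ : Measure (Fin d → ℝ)} {g : Fin d → ℝ → ℝ}
    (h : ∀ i, AEMeasurable (g i) (marg μ i)) : AEMeasurable (fun x i => g i (x i)) μ :=
  aemeasurable_pi_lambda _ fun i => (h i).comp_aemeasurable (measurable_pi_apply i).aemeasurable

lemma joinCopula_copulaOf [NeZero d] (F : Fin d → Measure ℝ) (hF : IsMargOS F)
    (μ : Measure (Fin d → ℝ)) (hμ : ∀ i, marg μ i = F i) :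
    joinCopula F (copulaOf μ) = μ := by
  have hP := hF.prob
  have hco : copulaOf μ = μ.map fun x i => cdf1 (F i) (x i) := by simp only [copulaOf, hμ]
  have hm : Measurable fun (x : Fin d → ℝ) i => cdf1 (F i) (x i) :=
    measurable_pi_lambda _ fun i => (cdf1_mono (F i)).measurable.comp (measurable_pi_apply i)
  have hu : ∀ i, marg (copulaOf μ) i = uniform01 := by
    intro i
    rw [hco, map_eval_comp μ _ fun i => (cdf1_mono (F i)).measurable, hμ, map_cdf1 (F i) (hF.cont i)]
  have hq : AEMeasurable (fun u i => qReal (F i) (u i)) (copulaOf μ) :=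
    aemeasurable_coord (g := fun i => qReal (F i)) fun i => by
      rw [hu i]; exact qReal_aemeasurable (F i) (hF.cont i)
  rw [joinCopula]
  rw [hco] at hq ⊢
  rw [AEMeasurable.map_map_of_aemeasurable hq hm.aemeasurable]
  have hae : ∀ᵐ x ∂μ, ∀ i, qReal (F i) (cdf1 (F i) (x i)) = x i := by
    rw [ae_all_iff]; intro i
    exact ae_of_marg (p := fun t => qReal (F i) (cdf1 (F i) t) = t)
      ((hμ i).symm ▸ qReal_cdf1_ae (F i) (hF.cont i))
  conv_rhs => rw [← Measure.map_id (μ := μ)]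
  refine Measure.map_congr ?_
  filter_upwards [hae] with x hx
  funext i
  exact hx i

lemma copulaOf_symmetrize [NeZero d] (F : Fin d → Measure ℝ) (hF : IsMargOS F)
    (μ : Measure (Fin d → ℝ)) (hμ : ∀ i, marg μ i = F i) :
    copulaOf (symmetrize μ) = symmetrize (μ.map fun x i => Gbar F (x i)) := by
  have := meanMeas_prob F hF.prob
  have hG := cdf1_meanMeas F hF.prob
  have hmono : Monotone (Gbar F) := hG ▸ cdf1_mono (meanMeas F)
  rw [← map_symmetrize μ hmono.measurable]
  simp only [copulaOf, marg_symmetrize, funext hμ, hG]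

lemma SF_copulaOf [NeZero d] (F : Fin d → Measure ℝ) (hF : IsMargOS F)
    (μ : Measure (Fin d → ℝ)) (hμ : ∀ i, marg μ i = F i) :
    SF F (copulaOf μ) = symmetrize (μ.map fun x i => Gbar F (x i)) := by
  rw [SF, joinCopula_copulaOf F hF μ hμ, copulaOf_symmetrize F hF μ hμ]

lemma multidiag_eq (C : Measure (Fin d → ℝ)) (i : Fin d) :
    multidiag C i = marg (C.map orderStat) i := by
  rw [marg, Measure.map_map (measurable_pi_apply i) measurable_orderStat]
  rfl

/-- The symmetrization of an order statistic with marginals `F`, transformed by `G`, is a symmetric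
copula with multidiagonal `δ^F`. -/
lemma symmetrize_mem [NeZero d] (F : Fin d → Measure ℝ) (hF : IsMargOS F)
    (μ : Measure (Fin d → ℝ)) (hμ : IsCdfOS F μ) :
    IsCopula (symmetrize (μ.map fun x i => Gbar F (x i))) ∧
      ∀ i, multidiag (symmetrize (μ.map fun x i => Gbar F (x i))) i = mdiagF F i := by
  obtain ⟨hP, hmon, hmarg⟩ := hμ
  have := meanMeas_prob F hF.prob
  have hG := cdf1_meanMeas F hF.prob
  have hmono : Monotone (Gbar F) := hG ▸ cdf1_mono (meanMeas F)
  have hm : Measurable fun (x : Fin d → ℝ) i => Gbar F (x i) :=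
    measurable_pi_lambda _ fun i => hmono.measurable.comp (measurable_pi_apply i)
  have : IsProbabilityMeasure (μ.map fun x i => Gbar F (x i)) :=
    Measure.isProbabilityMeasure_map hm.aemeasurable
  refine ⟨⟨inferInstance, fun i => ?_⟩, fun i => ?_⟩
  · rw [← map_symmetrize μ hmono.measurable,
      map_eval_comp _ (fun _ => Gbar F) fun _ => hmono.measurable, marg_symmetrize, funext hmarg,
      ← hG, map_cdf1 _ (meanMeas_singleton F hF.cont)]
  · have hae : ∀ᵐ x ∂μ, Monotone x := (prob_compl_eq_zero_iff isClosed_monotone.measurableSet).2 hmon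
    rw [multidiag_eq, map_orderStat_symmetrize, Measure.map_map measurable_orderStat hm]
    have : μ.map (orderStat ∘ fun x i => Gbar F (x i)) = μ.map fun x i => Gbar F (x i) := by
      refine Measure.map_congr ?_
      filter_upwards [hae] with x hx
      exact orderStat_of_monotone (hmono.comp hx)
    rw [this, map_eval_comp _ (fun _ => Gbar F) fun _ => hmono.measurable, hmarg, mdiagF]

/-- A symmetric copula `C` with multidiagonal `δ^F` comes from the law of
`(G⁻¹(U_(1)), …, G⁻¹(U_(d)))` with `U ∼ C`, an order statistic with marginals `F`. -/
lemma exists_preimage [NeZero d] (F : Fin d → Measure ℝ) (hF : IsMargOS F)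
    (C : Measure (Fin d → ℝ)) (hC : IsCopula C) (hsym : IsSymmetric C)
    (hδ : ∀ i, multidiag C i = mdiagF F i) :
    ∃ μ, IsCdfOS F μ ∧ symmetrize (μ.map fun x i => Gbar F (x i)) = C := by
  obtain ⟨hP, hunif⟩ := hC
  have := meanMeas_prob F hF.prob
  have hcont := meanMeas_singleton F hF.cont
  have hG := cdf1_meanMeas F hF.prob
  have hmono : Monotone (Gbar F) := hG ▸ cdf1_mono (meanMeas F)
  have hm : Measurable fun (x : Fin d → ℝ) i => Gbar F (x i) :=
    measurable_pi_lambda _ fun i => hmono.measurable.comp (measurable_pi_apply i)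
  have hV : ∀ i, marg (C.map orderStat) i = (F i).map (Gbar F) := fun i => by
    rw [← multidiag_eq, hδ, mdiagF]
  -- The marginals of the order statistics are dominated by the uniform law.
  have hac : ∀ i, marg (C.map orderStat) i ≪ uniform01 := fun i => by
    rw [hV i, ← map_cdf1 _ hcont, hG]
    exact (absolutelyContinuous_meanMeas F i).map hmono.measurable
  have : IsProbabilityMeasure (C.map orderStat) :=
    Measure.isProbabilityMeasure_map measurable_orderStat.aemeasurable
  have hq1 : ∀ i, AEMeasurable (qReal (meanMeas F)) (marg (C.map orderStat) i) := fun i =>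
    (qReal_aemeasurable _ hcont).mono_ac (hac i)
  have hq : AEMeasurable (fun (x : Fin d → ℝ) i => qReal (meanMeas F) (x i)) (C.map orderStat) :=
    aemeasurable_coord (g := fun _ => qReal (meanMeas F)) hq1
  have hIoo : ∀ᵐ v ∂(C.map orderStat), ∀ i, v i ∈ Ioo (0 : ℝ) 1 := by
    rw [ae_all_iff]; intro i
    exact ae_of_marg ((hac i).ae_le uniform01_ae_Ioo)
  have hmonV : ∀ᵐ v ∂(C.map orderStat), Monotone v := by
    rw [ae_map_iff measurable_orderStat.aemeasurable isClosed_monotone.measurableSet]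
    exact Filter.Eventually.of_forall orderStat_monotone
  have hPμ : IsProbabilityMeasure
      ((C.map orderStat).map fun x i => qReal (meanMeas F) (x i)) :=
    Measure.isProbabilityMeasure_map hq
  refine ⟨(C.map orderStat).map fun x i => qReal (meanMeas F) (x i), ⟨hPμ, ?_, fun i => ?_⟩, ?_⟩
  · rw [← prob_compl_eq_zero_iff isClosed_monotone.measurableSet]
    change ∀ᵐ x ∂((C.map orderStat).map fun x i => qReal (meanMeas F) (x i)), Monotone x
    rw [ae_map_iff hq isClosed_monotone.measurableSet]
    filter_upwards [hIoo, hmonV] with v hv1 hv2 i j hij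
    exact qReal_monotoneOn _ hcont (hv1 i) (hv1 j) (hv2 hij)
  · have hstep : marg ((C.map orderStat).map fun x i => qReal (meanMeas F) (x i)) i
        = (marg (C.map orderStat) i).map (qReal (meanMeas F)) := by
      rw [marg, AEMeasurable.map_map_of_aemeasurable (measurable_pi_apply i).aemeasurable hq, marg,
        AEMeasurable.map_map_of_aemeasurable (hq1 i) (measurable_pi_apply i).aemeasurable]
      rfl
    have hqi := hq1 i
    rw [hV i] at hqi
    rw [hstep, hV i, AEMeasurable.map_map_of_aemeasurable hqi hmono.measurable.aemeasurable]
    conv_rhs => rw [← Measure.map_id (μ := F i)]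
    refine Measure.map_congr ?_
    filter_upwards [(absolutelyContinuous_meanMeas F i).ae_le (qReal_cdf1_ae _ hcont)] with x hx
    rw [hG] at hx
    exact hx
  · rw [AEMeasurable.map_map_of_aemeasurable hm.aemeasurable hq]
    have : (C.map orderStat).map ((fun (x : Fin d → ℝ) i => Gbar F (x i)) ∘
        fun x i => qReal (meanMeas F) (x i)) = C.map orderStat := by
      conv_rhs => rw [← Measure.map_id (μ := C.map orderStat)]
      refine Measure.map_congr ?_
      filter_upwards [hIoo] with v hv
      funext i
      have := cdf1_qReal _ hcont (hv i)
      rwa [hG] at this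
    rw [this, symmetrize_map_orderStat C hsym]

/-- Proposition `prop:char_cfsym`.  Let `F = (F_1, …, F_d)` be a `d`-tuple
of continuous cdfs on `ℝ` with `F_{i-1} ≥ F_i` pointwise.  Then
`C^sym(F) = C_{δ^F} ∩ C^sym` : the image of `C^OS(F)` under `S_F` equals the set of symmetric
copulas whose multidiagonal is `δ^F = (F_i ∘ G^{-1}, 1 ≤ i ≤ d)`, where
`G = (1/d) ∑_{i=1}^d F_i`. -/
theorem stmt_8 {d : ℕ} [NeZero d] (F : Fin d → Measure ℝ) (hF : IsMargOS F) :
    SF F '' copulaOS F =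
      {C | IsCopula C ∧ IsSymmetric C ∧
        ∀ (i : Fin d) (t : ℝ), cdf1 (multidiag C i) t = cdfE (F i) (qInvE (Gbar F) t)} := by
  ext C
  simp only [mem_image, mem_ofPred_eq]
  constructor
  · rintro ⟨_, ⟨μ, hμ, rfl⟩, rfl⟩
    obtain ⟨hcop, hdiag⟩ := symmetrize_mem F hF μ hμ
    rw [SF_copulaOf F hF μ hμ.2.2]
    exact ⟨hcop, symmetrize_isSymmetric _, fun i t => by rw [hdiag, cdf1_mdiagF F hF]⟩
  · rintro ⟨hcop, hsym, hcdf⟩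
    have hδ : ∀ i, multidiag C i = mdiagF F i := by
      intro i
      have := hcop.1
      have := hF.prob
      have := meanMeas_prob F hF.prob
      have hmono : Monotone (Gbar F) := cdf1_meanMeas F hF.prob ▸ cdf1_mono (meanMeas F)
      have : IsProbabilityMeasure (multidiag C i) :=
        Measure.isProbabilityMeasure_map
          ((measurable_pi_apply i).comp measurable_orderStat).aemeasurable
      have : IsProbabilityMeasure (mdiagF F i) :=
        Measure.isProbabilityMeasure_map hmono.measurable.aemeasurable
      refine Measure.ext_of_Iic _ _ fun t => ?_
      rw [← ofReal_cdf1, ← ofReal_cdf1, hcdf, cdf1_mdiagF F hF]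
    obtain ⟨μ, hμ, h⟩ := exists_preimage F hF C hcop hsym hδ
    exact ⟨copulaOf μ, ⟨μ, hμ, rfl⟩, by rw [SF_copulaOf F hF μ hμ.2.2, h]⟩

end MaxEntOS
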